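/- For any non-empty partition λ, the Wronskian Laguerre polynomials satisfy F_λ·l_λ^(α)(x) = Σ_{μ⋖λ} (x+α−c(λ/μ))·F_μ·l_μ^(α)(x) + x(|λ|−1)·Σ_{ρ∈R₂⁻(λ)} (−1)^{ht(λ/ρ)}·F_ρ·l_ρ^(α)(x). -/

import Mathlib

open Polynomial Finset

/-- `AddBox μ lam` means the Young diagram `lam` is obtained from `μ` by adding one box,
i.e. `μ ⋖ lam` in the Young lattice. -/
def AddBox (μ lam : YoungDiagram) : Prop := μ ≤ lam ∧ lam.card = μ.card + 1

/-- The sum of the contents (column − row) of the boxes of `lam` not in `μ`;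
when `lam/μ` is a single box this is the content of that box. -/
def skewContent (lam μ : YoungDiagram) : ℤ :=
  ∑ c ∈ lam.cells \ μ.cells, ((c.2 : ℤ) - (c.1 : ℤ))

/-- `F μ`: the number of standard Young tableaux of shape `μ`, i.e. bijective fillings of the
cells of `μ` by `0, …, |μ|-1` that increase along rows and columns. -/
noncomputable def SYTCount (μ : YoungDiagram) : ℕ :=
  Nat.card {T : μ.cells ≃ Fin μ.card //
    ∀ a b : μ.cells, (a : ℕ × ℕ).1 ≤ (b : ℕ × ℕ).1 → (a : ℕ × ℕ).2 ≤ (b : ℕ × ℕ).2 →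
      (T a : ℕ) ≤ (T b : ℕ)}

/-- `lam` is obtained from `ρ` by adding a horizontal domino. -/
def AddDominoH (ρ lam : YoungDiagram) : Prop :=
  ρ ≤ lam ∧ ∃ i j : ℕ, lam.cells \ ρ.cells = {(i, j), (i, j + 1)}

/-- `lam` is obtained from `ρ` by adding a vertical domino. -/
def AddDominoV (ρ lam : YoungDiagram) : Prop :=
  ρ ≤ lam ∧ ∃ i j : ℕ, lam.cells \ ρ.cells = {(i, j), (i + 1, j)}

/-- The number of (nonempty) rows of a Young diagram. -/
def nrows (μ : YoungDiagram) : ℕ := μ.colLen 0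

/-- The degree vector of a partition: `n_i = λ_i + r - i` (here `0`-indexed). -/
def degVec (μ : YoungDiagram) (i : Fin (nrows μ)) : ℕ :=
  μ.rowLen i + (nrows μ - 1 - (i : ℕ))

/-- Modified Laguerre polynomials, defined by `l_0 = 1`, `l_1 = x + α`,
`l_n = (x+α-n+1) l_{n-1} + x(n-1) l_{n-2}`. -/
noncomputable def lm (α : ℝ) : ℕ → Polynomial ℝ
  | 0 => 1
  | 1 => X + C α
  | (n + 2) =>
      (X + C (α - ((n : ℝ) + 2) + 1)) * lm α (n + 1) + X * C ((n : ℝ) + 1) * lm α n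

/-- The Wronskian of a family of polynomials. -/
noncomputable def Wr {r : ℕ} (p : Fin r → Polynomial ℝ) : Polynomial ℝ :=
  Matrix.det (Matrix.of fun i j : Fin r => derivative^[(i : ℕ)] (p j))

/-- The Wronskian Laguerre polynomial
`l_μ^(α) = Wr[l_{n_1}, …, l_{n_r}] / ∏_{i<j} (n_j - n_i)` where `(n_i)` is the degree vector. -/
noncomputable def lW (α : ℝ) (μ : YoungDiagram) : Polynomial ℝ :=
  C (∏ p ∈ Finset.univ.filter (fun p : Fin (nrows μ) × Fin (nrows μ) => p.1 < p.2),
        ((degVec μ p.2 : ℝ) - (degVec μ p.1 : ℝ)))⁻¹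
    * Wr (fun i => lm α (degVec μ i))


namespace WL

/-- Sum over columns of column replacement equals sum over rows of row replacement. -/
lemma sum_updateCol_eq {R : Type*} [CommRing R] {n : ℕ} (A B : Matrix (Fin n) (Fin n) R) :
    ∑ j, (A.updateCol j (fun i => B i j)).det = ∑ i, (A.updateRow i (B i)).det := by
  have h1 : ∀ j, (A.updateCol j (fun i => B i j)).det = ∑ i, A.adjugate j i * B i j := by
    intro j
    rw [← Matrix.cramer_apply, Matrix.cramer_eq_adjugate_mulVec]
    rfl
  have h2 : ∀ i, (A.updateRow i (B i)).det = ∑ j, A.adjugate j i * B i j := by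
    intro i
    rw [← Matrix.cramer_transpose_apply, Matrix.cramer_eq_adjugate_mulVec,
      ← Matrix.adjugate_transpose]
    rfl
  simp_rw [h1, h2]
  exact Finset.sum_comm

/-- Jacobi–Trudi type determinant. -/
def D {R : Type*} [CommRing R] (h : ℤ → R) (r : ℕ) (a : ℕ → ℤ) : R :=
  Matrix.det (Matrix.of fun i j : Fin r => h (a j + (i : ℕ)))

variable {R : Type*} [CommRing R]

lemma D_congr (h : ℤ → R) (r : ℕ) {a b : ℕ → ℤ} (hab : ∀ j < r, a j = b j) :
    D h r a = D h r b := by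
  unfold D
  congr 1
  ext i j
  simp [hab j j.2]

lemma D_update (h : ℤ → R) (r : ℕ) (a : ℕ → ℤ) (j : Fin r) (v : ℤ) :
    D h r (Function.update a j v) =
      ((Matrix.of fun i j : Fin r => h (a j + (i : ℕ))).updateCol j
        (fun i => h (v + (i : ℕ)))).det := by
  unfold D
  congr 1
  ext i k
  by_cases hk : k = j
  · subst hk; simp
  · have : (k : ℕ) ≠ j := fun hh => hk (Fin.ext hh)
    simp [Matrix.updateCol_ne hk, Function.update_of_ne this]

lemma D_swap (h : ℤ → R) (r : ℕ) {a b : ℕ → ℤ} {j k : ℕ} (hj : j < r) (hk : k < r) (hjk : j ≠ k)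
    (h1 : a j = b k) (h2 : a k = b j) (h3 : ∀ l, l ≠ j → l ≠ k → a l = b l) :
    D h r a = - D h r b := by
  unfold D
  have := Matrix.det_permute' (Equiv.swap (⟨j, hj⟩ : Fin r) ⟨k, hk⟩)
    (Matrix.of fun i j : Fin r => h (b j + (i : ℕ)))
  rw [Equiv.Perm.sign_swap (by simpa using hjk)] at this
  simp only [Units.val_neg, Units.val_one, Int.cast_neg, Int.cast_one, neg_mul, one_mul] at this
  rw [← this]
  congr 1
  ext i l
  simp only [Matrix.submatrix_apply, Matrix.of_apply, id]
  congr 2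
  by_cases hl : l = ⟨j, hj⟩
  · subst hl; simp [h1]
  by_cases hl' : l = ⟨k, hk⟩
  · subst hl'; simp [h2]
  rw [Equiv.swap_apply_of_ne_of_ne hl hl']
  apply h3
  · intro hh; exact hl (Fin.ext hh)
  · intro hh; exact hl' (Fin.ext hh)

lemma D_zero (h : ℤ → R) (h0 : ∀ m < 0, h m = 0) (r : ℕ) {a : ℕ → ℤ} {j k : ℕ} (hj : j < r)
    (hjk : j < k) (hr : ∀ k, r ≤ k → a k ≤ - r) (e : a j = a k) : D h r a = 0 := by
  unfold D
  by_cases hk : k < r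
  · apply Matrix.det_zero_of_column_eq (i := ⟨j, hj⟩) (j := ⟨k, hk⟩)
    · intro hh; rw [Fin.mk.injEq] at hh; omega
    · intro i; simp [e]
  · apply Matrix.det_eq_zero_of_column_eq_zero ⟨j, hj⟩
    intro i
    have := hr k (by omega)
    have := i.2
    simp only [Matrix.of_apply]
    apply h0
    omega

lemma D_succ (h : ℤ → R) (h0 : ∀ m < 0, h m = 0) (h1 : h 0 = 1) (r : ℕ) {a : ℕ → ℤ}
    (hr : a r = - r) : D h (r + 1) a = D h r a := by
  unfold D
  rw [Matrix.det_succ_column _ (Fin.last r), Finset.sum_eq_single (Fin.last r)]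
  · simp only [Fin.val_last, Matrix.of_apply, hr, neg_add_cancel, h1, mul_one]
    rw [← two_mul, pow_mul]
    simp only [even_two, Even.neg_pow, one_pow, one_mul]
    congr 1
    ext i j
    simp
  · intro i _ hi
    have : (i : ℕ) < r := by
      have := i.2
      have : (i : ℕ) ≠ r := fun hh => hi (Fin.ext hh)
      omega
    rw [Matrix.of_apply, h0]
    · simp
    · simp only [Fin.val_last, hr]; omega
  · simp

lemma D_stab (h : ℤ → R) (h0 : ∀ m < 0, h m = 0) (h1 : h 0 = 1) (r s : ℕ) (hrs : r ≤ s)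
    {a : ℕ → ℤ} (hr : ∀ k, r ≤ k → a k = - k) : D h s a = D h r a := by
  induction s, hrs using Nat.le_induction with
  | base => rfl
  | succ s hs ih => rw [D_succ h h0 h1 s (hr s hs), ih]

lemma D_rec (h : ℤ → R) (x b c : R)
    (hrec : ∀ m : ℤ, (m : R) * h m = (x - b * ((m : R) - 1)) * h (m - 1) + c * h (m - 2))
    (r : ℕ) (a : ℕ → ℤ) :
    ((∑ j ∈ range r, (a j + j) : ℤ) : R) * D h r a =
      ∑ j ∈ range r, (x - b * ((a j : R) - 1)) * D h r (Function.update a j (a j - 1))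
      + c * ∑ j ∈ range r, D h r (Function.update a j (a j - 2)) := by
  set A : Matrix (Fin r) (Fin r) R := Matrix.of fun i j : Fin r => h (a j + (i : ℕ)) with hA
  have hD : D h r a = A.det := rfl
  rw [Finset.sum_range, Finset.sum_range, Finset.sum_range]
  have key : ∀ j : Fin r,
      (a j : R) * A.det + (A.updateCol j (fun i => ((i : ℕ) : R) * h (a j + (i : ℕ)))).det
      = (x - b * ((a j : R) - 1)) * D h r (Function.update a j (a j - 1))
        + c * D h r (Function.update a j (a j - 2))
        - b * (A.updateCol j (fun i => ((i : ℕ) : R) * h (a j - 1 + (i : ℕ)))).det := by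
    intro j
    rw [D_update, D_update, ← hA]
    have e1 : A.det = (A.updateCol j (fun i => h (a j + (i : ℕ)))).det := by
      congr 1
      ext i k
      by_cases hk : k = j
      · subst hk; simp [hA]
      · simp [Matrix.updateCol_ne hk]
    conv_lhs => rw [e1]
    rw [sub_eq_add_neg, ← neg_mul]
    simp only [← Matrix.det_updateCol_smul, ← Matrix.det_updateCol_add]
    congr 2
    ext i
    have := hrec (a j + (i : ℕ))
    push_cast at this
    simp only [Pi.add_apply, Pi.smul_apply, smul_eq_mul]
    rw [show a j - 1 + ((i : ℕ) : ℤ) = a j + (i : ℕ) - 1 by ring,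
      show a j - 2 + ((i : ℕ) : ℤ) = a j + (i : ℕ) - 2 by ring]
    linear_combination this
  have hs := Finset.sum_congr rfl (fun j (_ : j ∈ (univ : Finset (Fin r))) => key j)
  rw [Finset.sum_add_distrib, Finset.sum_sub_distrib, Finset.sum_add_distrib, ← Finset.sum_mul,
    ← Finset.mul_sum, ← Finset.mul_sum] at hs
  have z1 : ∑ j : Fin r, (A.updateCol j (fun i => ((i : ℕ) : R) * h (a j + (i : ℕ)))).det
      = (∑ i : Fin r, ((i : ℕ) : R)) * A.det := by
    have := sum_updateCol_eq A (Matrix.of fun i j => ((i : ℕ) : R) * h (a j + (i : ℕ)))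
    simp only [Matrix.of_apply] at this
    rw [this, Finset.sum_mul]
    refine Finset.sum_congr rfl fun i _ => ?_
    have e : (Matrix.of fun (i j : Fin r) => ((i : ℕ) : R) * h (a j + (i : ℕ))) i
        = ((i : ℕ) : R) • A i := by
      ext j; simp [hA]
    rw [e, Matrix.det_updateRow_smul, Matrix.updateRow_eq_self]
  have z2 : ∑ j : Fin r, (A.updateCol j (fun i => ((i : ℕ) : R) * h (a j - 1 + (i : ℕ)))).det
      = 0 := by
    have := sum_updateCol_eq A (Matrix.of fun i j => ((i : ℕ) : R) * h (a j - 1 + (i : ℕ)))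
    simp only [Matrix.of_apply] at this
    rw [this]
    refine Finset.sum_eq_zero fun i _ => ?_
    by_cases hi : (i : ℕ) = 0
    · apply Matrix.det_eq_zero_of_row_eq_zero i
      intro j
      simp [hi]
    · have hi' : (i : ℕ) - 1 < r := by omega
      have e : (Matrix.of fun (i j : Fin r) => ((i : ℕ) : R) * h (a j - 1 + (i : ℕ))) i
          = ((i : ℕ) : R) • A ⟨(i : ℕ) - 1, hi'⟩ := by
        ext j
        simp only [Matrix.of_apply, Pi.smul_apply, smul_eq_mul, hA]
        congr 2
        push_cast [Nat.one_le_iff_ne_zero.mpr hi]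
        ring
      rw [e, Matrix.det_updateRow_smul, Matrix.det_updateRow_eq_zero, mul_zero]
      intro hh
      have := congrArg Fin.val hh
      simp at this
      omega
  rw [z1, z2] at hs
  rw [hD]
  push_cast
  rw [Finset.sum_add_distrib]
  linear_combination hs


section Young

/-- Subdiagram of `lam` with row lengths `f`. -/
def sub (lam : YoungDiagram) (f : ℕ → ℕ) : YoungDiagram where
  cells := lam.cells.filter (fun c => ∀ i ≤ c.1, c.2 < f i)
  isLowerSet := by
    intro c d hdc hc
    simp only [Finset.coe_filter, Set.mem_ofPred_eq] at hc ⊢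
    refine ⟨lam.isLowerSet hdc hc.1, fun i hi => ?_⟩
    exact lt_of_le_of_lt hdc.2 (hc.2 i (hi.trans hdc.1))

lemma ext_rowLen {μ ν : YoungDiagram} (h : ∀ i, μ.rowLen i = ν.rowLen i) : μ = ν := by
  ext ⟨i, j⟩
  rw [YoungDiagram.mem_cells, YoungDiagram.mem_cells, YoungDiagram.mem_iff_lt_rowLen,
    YoungDiagram.mem_iff_lt_rowLen, h]

lemma rowLen_eq_of {μ : YoungDiagram} {i n : ℕ} (h : ∀ j, (i, j) ∈ μ ↔ j < n) :
    μ.rowLen i = n := by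
  simp only [YoungDiagram.mem_iff_lt_rowLen] at h
  have h1 := h n
  have h2 := h (μ.rowLen i)
  omega

lemma sub_rowLen (lam : YoungDiagram) (f : ℕ → ℕ) (hf : ∀ i j, i ≤ j → f j ≤ f i)
    (hle : ∀ i, f i ≤ lam.rowLen i) (i : ℕ) : (sub lam f).rowLen i = f i := by
  apply rowLen_eq_of
  intro j
  rw [← YoungDiagram.mem_cells]
  simp only [sub, Finset.mem_filter, YoungDiagram.mem_cells, YoungDiagram.mem_iff_lt_rowLen]
  constructor
  · intro h; exact h.2 i le_rfl
  · intro h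
    exact ⟨lt_of_lt_of_le h (hle i), fun k hk => lt_of_lt_of_le h (hf k i hk)⟩

lemma le_iff_rowLen {μ lam : YoungDiagram} : μ ≤ lam ↔ ∀ i, μ.rowLen i ≤ lam.rowLen i := by
  constructor
  · intro h i
    by_contra hc
    push Not at hc
    have : (i, lam.rowLen i) ∈ μ := YoungDiagram.mem_iff_lt_rowLen.mpr hc
    have := YoungDiagram.mem_iff_lt_rowLen.mp (h this)
    omega
  · rintro h ⟨i, j⟩ hij
    rw [YoungDiagram.mem_iff_lt_rowLen] at hij ⊢
    exact lt_of_lt_of_le hij (h i)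

lemma mem_sdiff_rowLen {μ lam : YoungDiagram} (c : ℕ × ℕ) :
    c ∈ lam.cells \ μ.cells ↔ c.2 < lam.rowLen c.1 ∧ μ.rowLen c.1 ≤ c.2 := by
  obtain ⟨i, j⟩ := c
  simp only [Finset.mem_sdiff, YoungDiagram.mem_cells, YoungDiagram.mem_iff_lt_rowLen]
  omega

lemma rowLen_pos_iff (lam : YoungDiagram) (i : ℕ) : 0 < lam.rowLen i ↔ i < nrows lam := by
  rw [← YoungDiagram.mem_iff_lt_rowLen, YoungDiagram.mem_iff_lt_colLen]; rfl

lemma rowLen_zero (lam : YoungDiagram) {i : ℕ} (h : nrows lam ≤ i) : lam.rowLen i = 0 := by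
  have := rowLen_pos_iff lam i
  omega

lemma nrows_le {μ lam : YoungDiagram} (h : μ ≤ lam) : nrows μ ≤ nrows lam := by
  by_contra hc
  push Not at hc
  have h1 := (rowLen_pos_iff μ _).mpr hc
  have h2 := rowLen_zero lam (le_refl (nrows lam))
  have := le_iff_rowLen.mp h (nrows lam)
  omega

lemma card_eq_sum (lam : YoungDiagram) : lam.card = ∑ i ∈ range (nrows lam), lam.rowLen i := by
  unfold YoungDiagram.card
  rw [Finset.card_eq_sum_card_fiberwise (f := Prod.fst) (t := range (nrows lam))]
  · refine Finset.sum_congr rfl fun i _ => ?_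
    rw [YoungDiagram.rowLen_eq_card]; rfl
  · rintro ⟨i, j⟩ hij
    simp only [Finset.coe_range, Set.mem_Iio]
    rw [← rowLen_pos_iff]
    have := YoungDiagram.mem_iff_lt_rowLen.mp hij
    omega

/-- row lengths with `d` boxes removed from row `j`. -/
def dec (f : ℕ → ℕ) (j d : ℕ) : ℕ → ℕ := Function.update f j (f j - d)

def remH (lam : YoungDiagram) (d j : ℕ) : YoungDiagram := sub lam (dec lam.rowLen j d)

def remV (lam : YoungDiagram) (j : ℕ) : YoungDiagram :=
  sub lam (dec (dec lam.rowLen j 1) (j + 1) 1)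

lemma dec_apply (f : ℕ → ℕ) (j d i : ℕ) : dec f j d i = if i = j then f i - d else f i := by
  unfold dec
  by_cases h : i = j
  · subst h; simp
  · simp [h]

lemma remH_rowLen (lam : YoungDiagram) (d j : ℕ) (h : lam.rowLen (j + 1) + d ≤ lam.rowLen j)
    (i : ℕ) : (remH lam d j).rowLen i = if i = j then lam.rowLen i - d else lam.rowLen i := by
  unfold remH
  rw [sub_rowLen, dec_apply]
  · intro i k hik
    simp only [dec_apply]
    have := lam.rowLen_anti i k hik
    split_ifs with h1 h2 h2
    · omega
    · omega
    · subst h2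
      have := lam.rowLen_anti (i + 1) k (by omega)
      omega
    · exact this
  · intro i; rw [dec_apply]; split_ifs <;> omega

lemma remV_rowLen (lam : YoungDiagram) (j : ℕ) (h : lam.rowLen (j + 1) = lam.rowLen j)
    (h' : lam.rowLen (j + 2) < lam.rowLen (j + 1))
    (i : ℕ) : (remV lam j).rowLen i =
      if i = j ∨ i = j + 1 then lam.rowLen i - 1 else lam.rowLen i := by
  unfold remV
  rw [sub_rowLen]
  · simp only [dec_apply]; split_ifs <;> omega
  · intro i k hik
    simp only [dec_apply]
    have h1 := lam.rowLen_anti i k hik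
    by_cases hk : k ≤ j + 1
    · split_ifs <;> subst_vars <;> omega
    · have := lam.rowLen_anti (j + 2) k (by omega)
      split_ifs <;> subst_vars <;> omega
  · intro i; simp only [dec_apply]; split_ifs <;> omega

lemma remH_sdiff_one (lam : YoungDiagram) (j : ℕ) (h : lam.rowLen (j + 1) < lam.rowLen j) :
    lam.cells \ (remH lam 1 j).cells = {(j, lam.rowLen j - 1)} := by
  ext ⟨a, b⟩
  rw [mem_sdiff_rowLen, remH_rowLen lam 1 j h]
  simp only [Finset.mem_singleton, Prod.mk.injEq]
  split_ifs with ha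
  · subst ha; omega
  · omega

lemma remH_le (lam : YoungDiagram) (d j : ℕ) : remH lam d j ≤ lam := by
  intro c hc
  exact (Finset.mem_filter.mp hc).1

lemma remV_le (lam : YoungDiagram) (j : ℕ) : remV lam j ≤ lam := by
  intro c hc
  exact (Finset.mem_filter.mp hc).1

lemma card_sdiff_add {μ lam : YoungDiagram} (h : μ ≤ lam) :
    (lam.cells \ μ.cells).card + μ.card = lam.card :=
  Finset.card_sdiff_add_card_eq_card (YoungDiagram.cells_subset_iff.mpr h)

lemma remH_card (lam : YoungDiagram) (j : ℕ) (h : lam.rowLen (j + 1) < lam.rowLen j) :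
    lam.card = (remH lam 1 j).card + 1 := by
  have := card_sdiff_add (remH_le lam 1 j)
  rw [remH_sdiff_one lam j h] at this
  simp at this
  omega

/-- The corner rows. -/
def corners (lam : YoungDiagram) : Finset ℕ :=
  (range (nrows lam)).filter (fun j => lam.rowLen (j + 1) < lam.rowLen j)

def hRows (lam : YoungDiagram) : Finset ℕ :=
  (range (nrows lam)).filter (fun j => lam.rowLen (j + 1) + 2 ≤ lam.rowLen j)

def vRows (lam : YoungDiagram) : Finset ℕ :=
  (range (nrows lam)).filter (fun j => lam.rowLen (j + 1) = lam.rowLen j ∧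
    lam.rowLen (j + 2) < lam.rowLen (j + 1))

lemma rowLen_of_sdiff {μ lam : YoungDiagram} (hle : μ ≤ lam) {s : Finset (ℕ × ℕ)}
    (hs : lam.cells \ μ.cells = s) (i : ℕ) :
    lam.rowLen i = μ.rowLen i + (s.filter (fun c => c.1 = i)).card := by
  have h : s.filter (fun c => c.1 = i) = lam.row i \ μ.row i := by
    rw [← hs]
    ext c
    simp only [Finset.mem_filter, Finset.mem_sdiff, YoungDiagram.mem_row_iff,
      YoungDiagram.mem_cells]
    tauto
  have hsub : μ.row i ⊆ lam.row i := by
    intro c hc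
    rw [YoungDiagram.mem_row_iff] at hc ⊢
    exact ⟨hle hc.1, hc.2⟩
  have := Finset.card_sdiff_add_card_eq_card hsub
  rw [h, YoungDiagram.rowLen_eq_card, YoungDiagram.rowLen_eq_card]
  omega

lemma bij_box (lam : YoungDiagram) :
    Set.BijOn (remH lam 1) (corners lam) {μ : YoungDiagram | AddBox μ lam} := by
  refine ⟨?_, ?_, ?_⟩
  · intro j hj
    simp only [corners, Finset.coe_filter, Set.mem_ofPred_eq] at hj
    exact ⟨remH_le _ _ _, remH_card lam j hj.2⟩
  · intro j hj k hk hjk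
    simp only [corners, Finset.coe_filter, Set.mem_ofPred_eq] at hj hk
    have h := congrArg (fun ν => ν.rowLen j) hjk
    simp only [remH_rowLen lam 1 j hj.2, remH_rowLen lam 1 k hk.2] at h
    split_ifs at h <;> omega
  · rintro μ ⟨hle, hc⟩
    have h1 := card_sdiff_add hle
    obtain ⟨⟨i, j⟩, hij⟩ := Finset.card_eq_one.mp (show (lam.cells \ μ.cells).card = 1 by omega)
    have hr := rowLen_of_sdiff hle hij
    simp only [Finset.filter_singleton] at hr
    have hi := hr i
    have hi1 := hr (i + 1)
    have ha := μ.rowLen_anti i (i + 1) (by omega)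
    simp at hi hi1
    refine ⟨i, ?_, ?_⟩
    · simp only [corners, Finset.coe_filter, Set.mem_ofPred_eq, Finset.mem_range,
        ← rowLen_pos_iff]
      omega
    · apply ext_rowLen
      intro k
      rw [remH_rowLen lam 1 i (by omega)]
      have hk := hr k
      split_ifs at hk ⊢ <;> simp at hk <;> omega

lemma remH_sdiff_two (lam : YoungDiagram) (j : ℕ) (h : lam.rowLen (j + 1) + 2 ≤ lam.rowLen j) :
    lam.cells \ (remH lam 2 j).cells = {(j, lam.rowLen j - 2), (j, lam.rowLen j - 2 + 1)} := by
  ext ⟨a, b⟩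
  rw [mem_sdiff_rowLen, remH_rowLen lam 2 j h]
  simp only [Finset.mem_insert, Finset.mem_singleton, Prod.mk.injEq]
  split_ifs with ha
  · subst ha; omega
  · omega

lemma remV_sdiff (lam : YoungDiagram) (j : ℕ) (h : lam.rowLen (j + 1) = lam.rowLen j)
    (h' : lam.rowLen (j + 2) < lam.rowLen (j + 1)) :
    lam.cells \ (remV lam j).cells = {(j, lam.rowLen j - 1), (j + 1, lam.rowLen j - 1)} := by
  ext ⟨a, b⟩
  rw [mem_sdiff_rowLen, remV_rowLen lam j h h']
  simp only [Finset.mem_insert, Finset.mem_singleton, Prod.mk.injEq]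
  split_ifs with ha
  · rcases ha with ha | ha <;> subst ha <;> omega
  · omega

lemma bij_H (lam : YoungDiagram) :
    Set.BijOn (remH lam 2) (hRows lam) {μ : YoungDiagram | AddDominoH μ lam} := by
  refine ⟨?_, ?_, ?_⟩
  · intro j hj
    simp only [hRows, Finset.coe_filter, Set.mem_ofPred_eq] at hj
    exact ⟨remH_le _ _ _, _, _, remH_sdiff_two lam j hj.2⟩
  · intro j hj k hk hjk
    simp only [hRows, Finset.coe_filter, Set.mem_ofPred_eq] at hj hk
    have h := congrArg (fun ν => ν.rowLen j) hjk
    simp only [remH_rowLen lam 2 j hj.2, remH_rowLen lam 2 k hk.2] at h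
    split_ifs at h <;> omega
  · rintro μ ⟨hle, i, j, hij⟩
    have hr : ∀ k, lam.rowLen k = μ.rowLen k + if k = i then 2 else 0 := by
      intro k
      rw [rowLen_of_sdiff hle hij k]
      by_cases hk : k = i
      · subst hk
        simp [Finset.filter_insert, Finset.filter_singleton]
      · simp [Finset.filter_insert, Finset.filter_singleton, hk, Ne.symm hk]
    have hi := hr i
    have hi1 := hr (i + 1)
    have ha := μ.rowLen_anti i (i + 1) (by omega)
    simp at hi hi1
    refine ⟨i, ?_, ?_⟩
    · simp only [hRows, Finset.coe_filter, Set.mem_ofPred_eq, Finset.mem_range,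
        ← rowLen_pos_iff]
      omega
    · apply ext_rowLen
      intro k
      rw [remH_rowLen lam 2 i (by omega)]
      have hk := hr k
      split_ifs at hk ⊢ <;> omega

lemma bij_V (lam : YoungDiagram) :
    Set.BijOn (remV lam) (vRows lam) {μ : YoungDiagram | AddDominoV μ lam} := by
  refine ⟨?_, ?_, ?_⟩
  · intro j hj
    simp only [vRows, Finset.coe_filter, Set.mem_ofPred_eq] at hj
    exact ⟨remV_le _ _, _, _, remV_sdiff lam j hj.2.1 hj.2.2⟩
  · intro j hj k hk hjk
    simp only [vRows, Finset.coe_filter, Set.mem_ofPred_eq] at hj hk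
    have h : (remV lam j).rowLen j = (remV lam k).rowLen j := by rw [hjk]
    have h' : (remV lam j).rowLen k = (remV lam k).rowLen k := by rw [hjk]
    rw [remV_rowLen lam j hj.2.1 hj.2.2, remV_rowLen lam k hk.2.1 hk.2.2] at h h'
    have p1 := hj.2
    have p2 := hk.2
    rw [if_pos (Or.inl rfl)] at h
    rw [if_pos (show k = k ∨ k = k + 1 from Or.inl rfl)] at h'
    by_cases c1 : j = k ∨ j = k + 1
    · by_cases c2 : k = j ∨ k = j + 1
      · omega
      · rw [if_neg c2] at h'
        omega
    · rw [if_neg c1] at h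
      omega
  · rintro μ ⟨hle, i, j, hij⟩
    have hr : ∀ k, lam.rowLen k = μ.rowLen k + if k = i ∨ k = i + 1 then 1 else 0 := by
      intro k
      rw [rowLen_of_sdiff hle hij k]
      by_cases hk : k = i
      · subst hk
        simp [Finset.filter_insert, Finset.filter_singleton]
      · by_cases hk' : k = i + 1
        · subst hk'
          simp [Finset.filter_insert, Finset.filter_singleton]
        · simp [Finset.filter_insert, Finset.filter_singleton, hk, Ne.symm hk, hk', Ne.symm hk']
    have m1 : (i, j) ∈ lam.cells \ μ.cells := by rw [hij]; simp
    have m2 : (i + 1, j) ∈ lam.cells \ μ.cells := by rw [hij]; simp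
    rw [mem_sdiff_rowLen] at m1 m2
    have hi := hr i
    have hi1 := hr (i + 1)
    have hi2 := hr (i + 2)
    have ha := μ.rowLen_anti (i + 1) (i + 2) (by omega)
    simp at hi hi1 hi2 m1 m2
    refine ⟨i, ?_, ?_⟩
    · simp only [vRows, Finset.coe_filter, Set.mem_ofPred_eq, Finset.mem_range,
        ← rowLen_pos_iff]
      omega
    · apply ext_rowLen
      intro k
      rw [remV_rowLen lam i (by omega) (by omega)]
      have hk := hr k
      split_ifs at hk ⊢ <;> omega

lemma finsum_bij {M : Type*} [AddCommMonoid M] {s : Finset ℕ} {t : Set YoungDiagram}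
    {g : ℕ → YoungDiagram} (hb : Set.BijOn g s t) (w : YoungDiagram → M) :
    ∑ᶠ μ ∈ t, w μ = ∑ j ∈ s, w (g j) := by
  rw [← finsum_mem_coe_finset]
  exact (finsum_mem_eq_of_bijOn g hb (fun _ _ => rfl)).symm

lemma skewContent_remH (lam : YoungDiagram) (j : ℕ) (h : lam.rowLen (j + 1) < lam.rowLen j) :
    skewContent lam (remH lam 1 j) = (lam.rowLen j : ℤ) - j - 1 := by
  unfold skewContent
  rw [remH_sdiff_one lam j h, Finset.sum_singleton]
  push_cast [show 1 ≤ lam.rowLen j by omega]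
  ring

lemma card_domH {μ lam : YoungDiagram} (h : AddDominoH μ lam) : lam.card = μ.card + 2 := by
  obtain ⟨hle, i, j, hij⟩ := h
  have := card_sdiff_add hle
  rw [hij, Finset.card_pair (by simp)] at this
  omega

lemma card_domV {μ lam : YoungDiagram} (h : AddDominoV μ lam) : lam.card = μ.card + 2 := by
  obtain ⟨hle, i, j, hij⟩ := h
  have := card_sdiff_add hle
  rw [hij, Finset.card_pair (by simp)] at this
  omega

end Young

section Sums

def aOf (lam : YoungDiagram) (j : ℕ) : ℤ := (lam.rowLen j : ℤ) - j

def T (h : ℤ → R) (lam : YoungDiagram) : R := D h (nrows lam) (aOf lam)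

lemma aOf_zero (lam : YoungDiagram) {k : ℕ} (hk : nrows lam ≤ k) : aOf lam k = - k := by
  simp [aOf, rowLen_zero lam hk]

lemma T_stab (h : ℤ → R) (h0 : ∀ m < 0, h m = 0) (h1 : h 0 = 1) (lam : YoungDiagram) {r : ℕ}
    (hr : nrows lam ≤ r) : D h r (aOf lam) = T h lam :=
  D_stab h h0 h1 _ _ hr (fun _ hk => aOf_zero lam hk)

lemma box_sum (h : ℤ → R) (h0 : ∀ m < 0, h m = 0) (h1 : h 0 = 1) (lam : YoungDiagram)
    (φ : ℕ → R) :
    ∑ j ∈ range (nrows lam), φ j * D h (nrows lam) (Function.update (aOf lam) j (aOf lam j - 1))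
      = ∑ j ∈ corners lam, φ j * T h (remH lam 1 j) := by
  unfold corners
  rw [Finset.sum_filter]
  refine Finset.sum_congr rfl fun j hj => ?_
  have hj := Finset.mem_range.mp hj
  split_ifs with hc
  · rw [← T_stab h h0 h1 _ (nrows_le (remH_le lam 1 j))]
    congr 1
    apply D_congr
    intro k _
    simp only [aOf, remH_rowLen lam 1 j hc]
    by_cases hk : k = j
    · subst hk
      rw [Function.update_self, if_pos rfl]
      omega
    · rw [Function.update_of_ne hk, if_neg hk]
      rfl
  · rw [D_zero h h0 _ hj (show j < j + 1 by omega), mul_zero]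
    · intro k hk
      rw [Function.update_of_ne (by omega), aOf_zero lam hk]
      omega
    · have := lam.rowLen_anti j (j + 1) (by omega)
      rw [Function.update_self, Function.update_of_ne (by omega)]
      simp only [aOf]
      push_cast
      omega

lemma dom_sum (h : ℤ → R) (h0 : ∀ m < 0, h m = 0) (h1 : h 0 = 1) (lam : YoungDiagram) :
    ∑ j ∈ range (nrows lam), D h (nrows lam) (Function.update (aOf lam) j (aOf lam j - 2))
      = ∑ j ∈ hRows lam, T h (remH lam 2 j) - ∑ j ∈ vRows lam, T h (remV lam j) := by
  unfold hRows vRows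
  rw [Finset.sum_filter, Finset.sum_filter, ← Finset.sum_sub_distrib]
  refine Finset.sum_congr rfl fun j hj => ?_
  have hj := Finset.mem_range.mp hj
  have hanti := lam.rowLen_anti j (j + 1) (by omega)
  have hanti' := lam.rowLen_anti (j + 1) (j + 2) (by omega)
  have hzero : ∀ k, nrows lam ≤ k →
      Function.update (aOf lam) j (aOf lam j - 2) k ≤ - (nrows lam : ℤ) := by
    intro k hk
    rw [Function.update_of_ne (by omega), aOf_zero lam hk]
    omega
  by_cases hH : lam.rowLen (j + 1) + 2 ≤ lam.rowLen j
  · rw [if_pos hH, if_neg (by omega), sub_zero,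
      ← T_stab h h0 h1 _ (nrows_le (remH_le lam 2 j))]
    apply D_congr
    intro k _
    simp only [aOf, remH_rowLen lam 2 j hH]
    by_cases hk : k = j
    · subst hk
      rw [Function.update_self, if_pos rfl]
      omega
    · rw [Function.update_of_ne hk, if_neg hk]
      rfl
  rw [if_neg hH, zero_sub]
  by_cases hV : lam.rowLen (j + 1) = lam.rowLen j ∧ lam.rowLen (j + 2) < lam.rowLen (j + 1)
  · rw [if_pos hV, ← T_stab h h0 h1 _ (nrows_le (remV_le lam j))]
    have hj1 : j + 1 < nrows lam := by
      rw [← rowLen_pos_iff]; omega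
    apply D_swap h _ hj hj1 (by omega)
    · rw [Function.update_self]
      simp only [aOf, remV_rowLen lam j hV.1 hV.2]
      rw [if_pos (by simp)]
      push_cast
      omega
    · rw [Function.update_of_ne (by omega)]
      simp only [aOf, remV_rowLen lam j hV.1 hV.2]
      rw [if_pos (by simp)]
      push_cast
      omega
    · intro l hl hl'
      rw [Function.update_of_ne hl]
      simp only [aOf, remV_rowLen lam j hV.1 hV.2]
      rw [if_neg (by omega)]
  · rw [if_neg hV, neg_zero]
    by_cases he : lam.rowLen (j + 1) = lam.rowLen j
    · apply D_zero h h0 _ hj (show j < j + 2 by omega) hzero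
      rw [Function.update_self, Function.update_of_ne (by omega)]
      simp only [aOf]
      push_cast
      omega
    · apply D_zero h h0 _ hj (show j < j + 1 by omega) hzero
      rw [Function.update_self, Function.update_of_ne (by omega)]
      simp only [aOf]
      push_cast
      omega

lemma T_rec (h : ℤ → R) (h0 : ∀ m < 0, h m = 0) (h1 : h 0 = 1) (x b c : R)
    (hrec : ∀ m : ℤ, (m : R) * h m = (x - b * ((m : R) - 1)) * h (m - 1) + c * h (m - 2))
    (lam : YoungDiagram) :
    (lam.card : R) * T h lam =
      ∑ j ∈ corners lam, (x - b * ((aOf lam j : R) - 1)) * T h (remH lam 1 j)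
      + c * (∑ j ∈ hRows lam, T h (remH lam 2 j) - ∑ j ∈ vRows lam, T h (remV lam j)) := by
  have := D_rec h x b c hrec (nrows lam) (aOf lam)
  rw [dom_sum h h0 h1, box_sum h h0 h1 lam (fun j => x - b * ((aOf lam j : R) - 1))] at this
  rw [← this, T, card_eq_sum]
  simp [aOf]

end Sums

section SYT

def A (μ : YoungDiagram) : Set (ℕ × ℕ → ℕ) :=
  {f | (∀ c, c ∉ μ → f c = 0) ∧ Set.BijOn f (μ.cells : Set (ℕ × ℕ)) (Set.Icc 1 μ.card) ∧
    ∀ a b, a ∈ μ → b ∈ μ → a.1 ≤ b.1 → a.2 ≤ b.2 → f a ≤ f b}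

lemma SYTCount_eq (μ : YoungDiagram) : SYTCount μ = Nat.card (A μ) := by
  unfold SYTCount
  let Φ : {T : μ.cells ≃ Fin μ.card //
    ∀ a b : μ.cells, (a : ℕ × ℕ).1 ≤ (b : ℕ × ℕ).1 → (a : ℕ × ℕ).2 ≤ (b : ℕ × ℕ).2 →
      (T a : ℕ) ≤ (T b : ℕ)} → (ℕ × ℕ → ℕ) :=
    fun T c => if hc : c ∈ μ.cells then (T.1 ⟨c, hc⟩ : ℕ) + 1 else 0
  have hΦ : ∀ T (c) (hc : c ∈ μ.cells), Φ T c = (T.1 ⟨c, hc⟩ : ℕ) + 1 := by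
    intro T c hc
    simp only [Φ, dif_pos hc]
  have hmem : ∀ T, Φ T ∈ A μ := by
    intro T
    refine ⟨?_, ⟨?_, ?_, ?_⟩, ?_⟩
    · intro c hc
      exact dif_neg hc
    · intro c hc
      rw [hΦ T c hc]
      have := (T.1 ⟨c, hc⟩).2
      simp only [Set.mem_Icc]
      omega
    · intro c hc d hd hcd
      rw [hΦ T c hc, hΦ T d hd] at hcd
      have h1 : T.1 ⟨c, hc⟩ = T.1 ⟨d, hd⟩ := Fin.ext (by omega)
      exact congrArg Subtype.val (T.1.injective h1)
    · intro n hn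
      simp only [Set.mem_Icc] at hn
      let k : Fin μ.card := ⟨n - 1, by omega⟩
      refine ⟨(T.1.symm k).1, (T.1.symm k).2, ?_⟩
      rw [hΦ T _ (T.1.symm k).2]
      simp [k]
      omega
    · intro a b ha hb h1 h2
      rw [hΦ T a ha, hΦ T b hb]
      have := T.2 ⟨a, ha⟩ ⟨b, hb⟩ h1 h2
      omega
  apply Nat.card_eq_of_bijective (fun T => (⟨Φ T, hmem T⟩ : A μ))
  constructor
  · intro T T' hTT
    have hTT : Φ T = Φ T' := congrArg Subtype.val hTT
    apply Subtype.ext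
    apply Equiv.ext
    rintro ⟨c, hc⟩
    have := congrFun hTT c
    rw [hΦ T c hc, hΦ T' c hc] at this
    exact Fin.ext (by omega)
  · rintro ⟨f, hf0, hfb, hfm⟩
    have hr : ∀ c : μ.cells, 1 ≤ f c ∧ f c ≤ μ.card := fun c => hfb.1 c.2
    let t : μ.cells → Fin μ.card := fun c => ⟨f c - 1, by have := hr c; omega⟩
    have ht : Function.Bijective t := by
      constructor
      · intro c d hcd
        have h1 := congrArg Fin.val hcd
        have := hr c
        have := hr d
        simp only [t] at h1
        exact Subtype.ext (hfb.2.1 c.2 d.2 (by omega))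
      · intro k
        obtain ⟨c, hc, hck⟩ := hfb.2.2 (show (k : ℕ) + 1 ∈ Set.Icc 1 μ.card by
          simp only [Set.mem_Icc]; have := k.2; omega)
        refine ⟨⟨c, hc⟩, Fin.ext ?_⟩
        simp only [t]
        omega
    refine ⟨⟨Equiv.ofBijective t ht, ?_⟩, ?_⟩
    · intro a b h1 h2
      have := hfm a b a.2 b.2 h1 h2
      simp only [Equiv.ofBijective_apply, t]
      omega
    · apply Subtype.ext
      funext c
      by_cases hc : c ∈ μ.cells
      · change Φ _ c = f c
        rw [hΦ _ c hc]
        have := hr ⟨c, hc⟩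
        simp only [Equiv.ofBijective_apply, t]
        simp only at this
        omega
      · change Φ _ c = f c
        rw [hf0 c hc]
        exact dif_neg hc

lemma A_finite (μ : YoungDiagram) : Finite (A μ) := by
  have : SYTCount μ = Nat.card (A μ) := SYTCount_eq μ
  apply Finite.of_injective
    (fun f : A μ => (fun c : μ.cells => (⟨f.1 c, by
      have := f.2.2.1.1 c.2
      simp only [Set.mem_Icc] at this
      omega⟩ : Fin (μ.card + 1))))
  intro f g hfg
  apply Subtype.ext
  funext c
  by_cases hc : c ∈ μ.cells
  · exact congrArg Fin.val (congrFun hfg ⟨c, hc⟩)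
  · rw [f.2.1 c hc, g.2.1 c hc]

lemma mem_corner (lam : YoungDiagram) (j : ℕ) (h : lam.rowLen (j + 1) < lam.rowLen j)
    (c : ℕ × ℕ) : c ∈ lam ↔ c ∈ remH lam 1 j ∨ c = (j, lam.rowLen j - 1) := by
  have h1 := congrArg (fun s => c ∈ s) (remH_sdiff_one lam j h)
  have h2 : c ∈ remH lam 1 j → c ∈ lam := fun hc => remH_le lam 1 j hc
  simp only [Finset.mem_sdiff, Finset.mem_singleton, YoungDiagram.mem_cells, eq_iff_iff] at h1
  tauto

lemma notMem_corner (lam : YoungDiagram) (j : ℕ) (h : lam.rowLen (j + 1) < lam.rowLen j) :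
    (j, lam.rowLen j - 1) ∉ remH lam 1 j := by
  have h1 := congrArg (fun s => (j, lam.rowLen j - 1) ∈ s) (remH_sdiff_one lam j h)
  simp only [Finset.mem_sdiff, Finset.mem_singleton, YoungDiagram.mem_cells, eq_iff_iff] at h1
  tauto

lemma corner_max (lam : YoungDiagram) (j : ℕ) (h : lam.rowLen (j + 1) < lam.rowLen j)
    (b : ℕ × ℕ) (hb : b ∈ lam) (h1 : j ≤ b.1) (h2 : lam.rowLen j - 1 ≤ b.2) :
    b = (j, lam.rowLen j - 1) := by
  obtain ⟨p, q⟩ := b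
  rw [YoungDiagram.mem_iff_lt_rowLen] at hb
  simp only at h1 h2
  by_cases hp : p = j
  · subst hp
    simp only [Prod.mk.injEq, true_and]
    omega
  · have := lam.rowLen_anti (j + 1) p (by omega)
    omega

lemma update_mem (lam : YoungDiagram) (j : ℕ) (h : lam.rowLen (j + 1) < lam.rowLen j)
    (f : ℕ × ℕ → ℕ) (hf : f ∈ A (remH lam 1 j)) :
    Function.update f (j, lam.rowLen j - 1) lam.card ∈ A lam := by
  obtain ⟨hf0, hfb, hfm⟩ := hf
  have hcard := remH_card lam j h
  have hnm := notMem_corner lam j h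
  have hmc := mem_corner lam j h
  have hmax := corner_max lam j h
  set c : ℕ × ℕ := (j, lam.rowLen j - 1) with hc
  set μ := remH lam 1 j with hμ
  have hne : ∀ d, d ∈ μ → d ≠ c := fun d hd hdc => hnm (hdc ▸ hd)
  have hv : ∀ d, d ∈ μ → 1 ≤ f d ∧ f d ≤ μ.card := fun d hd => hfb.1 hd
  refine ⟨?_, ⟨?_, ?_, ?_⟩, ?_⟩
  · intro d hd
    rw [hmc] at hd
    push Not at hd
    rw [Function.update_of_ne hd.2, hf0 d hd.1]
  · intro d hd
    rcases (hmc d).mp hd with hd | hd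
    · rw [Function.update_of_ne (hne d hd), Set.mem_Icc]
      have := hv d hd
      omega
    · subst hd
      rw [Function.update_self, Set.mem_Icc]
      omega
  · intro d hd e he hde
    rcases (hmc d).mp hd with hd | hd <;> rcases (hmc e).mp he with he | he
    · rw [Function.update_of_ne (hne d hd), Function.update_of_ne (hne e he)] at hde
      exact hfb.2.1 hd he hde
    · rw [he, Function.update_of_ne (hne d hd), Function.update_self] at hde
      have := hv d hd
      omega
    · rw [hd, Function.update_of_ne (hne e he), Function.update_self] at hde
      have := hv e he
      omega
    · rw [hd, he]
  · intro n hn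
    rw [Set.mem_Icc] at hn
    by_cases hn' : n = lam.card
    · exact ⟨c, (hmc c).mpr (Or.inr rfl), by rw [Function.update_self, hn']⟩
    · obtain ⟨d, hd, hdn⟩ := hfb.2.2 (show n ∈ Set.Icc 1 μ.card by rw [Set.mem_Icc]; omega)
      exact ⟨d, (hmc d).mpr (Or.inl hd), by rw [Function.update_of_ne (hne d hd), hdn]⟩
  · intro a b ha hb h1 h2
    rcases (hmc b).mp hb with hb' | hb'
    · rcases (hmc a).mp ha with ha' | ha'
      · rw [Function.update_of_ne (hne a ha'), Function.update_of_ne (hne b hb')]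
        exact hfm a b ha' hb' h1 h2
      · subst ha'
        exact absurd (hmax b hb h1 h2) (hne b hb')
    · rw [hb', Function.update_self]
      rcases (hmc a).mp ha with ha' | ha'
      · rw [Function.update_of_ne (hne a ha')]
        have := hv a ha'
        omega
      · rw [ha', Function.update_self]

lemma exists_corner (lam : YoungDiagram) (hn : 1 ≤ lam.card) (g : ℕ × ℕ → ℕ) (hg : g ∈ A lam) :
    ∃ j, lam.rowLen (j + 1) < lam.rowLen j ∧ g (j, lam.rowLen j - 1) = lam.card ∧
      Function.update g (j, lam.rowLen j - 1) 0 ∈ A (remH lam 1 j) := by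
  obtain ⟨hf0, hfb, hfm⟩ := hg
  obtain ⟨⟨j, k⟩, hc, hcn⟩ := hfb.2.2 (show lam.card ∈ Set.Icc 1 lam.card by
    rw [Set.mem_Icc]; omega)
  have hv : ∀ d, d ∈ lam → 1 ≤ g d ∧ g d ≤ lam.card := fun d hd => hfb.1 hd
  have hmx : ∀ d, d ∈ lam → j ≤ d.1 → k ≤ d.2 → d = (j, k) := by
    intro d hd h1 h2
    have := hfm (j, k) d hc hd h1 h2
    have := hv d hd
    exact hfb.2.1 hd hc (by omega)
  have hjk : k < lam.rowLen j := YoungDiagram.mem_iff_lt_rowLen.mp hc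
  have e1 : lam.rowLen j = k + 1 := by
    by_contra hne
    have : (j, k + 1) ∈ lam := YoungDiagram.mem_iff_lt_rowLen.mpr (by omega)
    have := hmx _ this le_rfl (by simp)
    simp at this
  have e2 : lam.rowLen (j + 1) < lam.rowLen j := by
    by_contra hne
    have : (j + 1, k) ∈ lam := YoungDiagram.mem_iff_lt_rowLen.mpr (by omega)
    have := hmx _ this (by simp) le_rfl
    simp at this
  have e3 : lam.rowLen j - 1 = k := by omega
  refine ⟨j, e2, by rw [e3]; exact hcn, ?_⟩
  have hcard := remH_card lam j e2
  have hnm := notMem_corner lam j e2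
  have hmc := mem_corner lam j e2
  rw [e3] at hnm hmc ⊢
  set c : ℕ × ℕ := (j, k) with hc
  set μ := remH lam 1 j with hμ
  have hne : ∀ d, d ∈ μ → d ≠ c := fun d hd hdc => hnm (hdc ▸ hd)
  have hin : ∀ d, d ∈ μ → d ∈ lam := fun d hd => (hmc d).mpr (Or.inl hd)
  refine ⟨?_, ⟨?_, ?_, ?_⟩, ?_⟩
  · intro d hd
    by_cases hdc : d = c
    · rw [hdc, Function.update_self]
    · rw [Function.update_of_ne hdc]
      apply hf0
      rw [hmc]
      tauto
  · intro d hd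
    rw [Function.update_of_ne (hne d hd), Set.mem_Icc]
    have := hv d (hin d hd)
    have : g d ≠ lam.card := by
      intro hh
      exact hne d hd (hfb.2.1 (hin d hd) ((hmc c).mpr (Or.inr rfl)) (hh.trans hcn.symm))
    omega
  · intro d hd e he hde
    rw [Function.update_of_ne (hne d hd), Function.update_of_ne (hne e he)] at hde
    exact hfb.2.1 (hin d hd) (hin e he) hde
  · intro n hn
    rw [Set.mem_Icc] at hn
    obtain ⟨d, hd, hdn⟩ := hfb.2.2 (show n ∈ Set.Icc 1 lam.card by rw [Set.mem_Icc]; omega)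
    have hdc : d ≠ c := by
      rintro rfl
      omega
    refine ⟨d, ?_, by rw [Function.update_of_ne hdc, hdn]⟩
    rcases (hmc d).mp hd with h | h
    · exact h
    · exact absurd h hdc
  · intro a b ha hb h1 h2
    rw [Function.update_of_ne (hne a ha), Function.update_of_ne (hne b hb)]
    exact hfm a b (hin a ha) (hin b hb) h1 h2

lemma mem_corners {lam : YoungDiagram} {j : ℕ} :
    j ∈ corners lam ↔ lam.rowLen (j + 1) < lam.rowLen j := by
  simp only [corners, Finset.mem_filter, Finset.mem_range, ← rowLen_pos_iff]
  omega

lemma SYT_rec (lam : YoungDiagram) (hn : 1 ≤ lam.card) :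
    SYTCount lam = ∑ j ∈ corners lam, SYTCount (remH lam 1 j) := by
  simp_rw [SYTCount_eq]
  rw [← Finset.sum_coe_sort (corners lam) (fun j => Nat.card (A (remH lam 1 j)))]
  have : ∀ μ, Finite (A μ) := A_finite
  rw [← Nat.card_sigma]
  symm
  apply Nat.card_eq_of_bijective
    (fun p : (Σ j : corners lam, A (remH lam 1 j)) =>
      (⟨_, update_mem lam p.1 (mem_corners.mp p.1.2) p.2.1 p.2.2⟩ : A lam))
  constructor
  · rintro ⟨⟨j, hj⟩, f, hf⟩ ⟨⟨k, hk⟩, g, hg⟩ hfg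
    have hfg : Function.update f (j, lam.rowLen j - 1) lam.card =
      Function.update g (k, lam.rowLen k - 1) lam.card := congrArg Subtype.val hfg
    have hj' := mem_corners.mp hj
    have hk' := mem_corners.mp hk
    have hjk : j = k := by
      by_contra hne
      have h1 := congrFun hfg (j, lam.rowLen j - 1)
      have hne' : (j, lam.rowLen j - 1) ≠ (k, lam.rowLen k - 1) := by
        simp [hne]
      rw [Function.update_self, Function.update_of_ne hne'] at h1
      have hm : (j, lam.rowLen j - 1) ∈ remH lam 1 k := by
        have := (mem_corner lam k hk' (j, lam.rowLen j - 1)).mp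
          (YoungDiagram.mem_iff_lt_rowLen.mpr (by omega))
        tauto
      have h2 : g (j, lam.rowLen j - 1) ∈ Set.Icc 1 (remH lam 1 k).card := hg.2.1.1 hm
      rw [Set.mem_Icc] at h2
      have := remH_card lam k hk'
      omega
    subst hjk
    have hfg' : f = g := by
      funext d
      by_cases hd : d = (j, lam.rowLen j - 1)
      · rw [hd, hf.1 _ (notMem_corner lam j hj'), hg.1 _ (notMem_corner lam j hj')]
      · have := congrFun hfg d
        rwa [Function.update_of_ne hd, Function.update_of_ne hd] at this
    subst hfg'
    rfl
  · rintro ⟨g, hg⟩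
    obtain ⟨j, hj, hv, hm⟩ := exists_corner lam hn g hg
    refine ⟨⟨⟨j, mem_corners.mpr hj⟩, ⟨_, hm⟩⟩, ?_⟩
    apply Subtype.ext
    simp only [Function.update_idem]
    rw [← hv, Function.update_eq_self]

lemma SYT_bot (lam : YoungDiagram) (hn : lam.card = 0) : SYTCount lam = 1 := by
  rw [SYTCount_eq]
  have hmem : ∀ c, c ∉ lam := by
    intro c hc
    have : lam.cells = ∅ := Finset.card_eq_zero.mp hn
    have h2 : c ∈ lam.cells := hc
    rw [this] at h2
    simp at h2
  rw [Nat.card_eq_one_iff_unique]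
  refine ⟨⟨fun f g => ?_⟩, ⟨⟨fun _ => 0, fun _ _ => rfl, ⟨?_, ?_, ?_⟩, fun _ _ _ _ _ _ => le_rfl⟩⟩⟩
  · apply Subtype.ext
    funext c
    rw [f.2.1 c (hmem c), g.2.1 c (hmem c)]
  · intro c hc; exact absurd hc (hmem c)
  · intro c hc; exact absurd hc (hmem c)
  · intro n hn'; rw [Set.mem_Icc] at hn'; omega

end SYT

section Final

noncomputable def gf (m : ℤ) : ℝ := if m < 0 then 0 else ((m.toNat.factorial : ℕ) : ℝ)⁻¹

noncomputable def hf (α : ℝ) (m : ℤ) : ℝ[X] := C (gf m) * lm α m.toNat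

lemma gf_neg (m : ℤ) (h : m < 0) : gf m = 0 := if_pos h

lemma gf_nat (n : ℕ) : gf (n : ℤ) = ((n.factorial : ℕ) : ℝ)⁻¹ := by
  unfold gf
  rw [if_neg (by omega), Int.toNat_natCast]

lemma gf_zero : gf 0 = 1 := by simp [gf]

lemma hf_neg (α : ℝ) (m : ℤ) (h : m < 0) : hf α m = 0 := by simp [hf, gf_neg m h]

lemma hf_zero (α : ℝ) : hf α 0 = 1 := by simp [hf, gf_zero, lm]

lemma hf_nat (α : ℝ) (n : ℕ) : hf α (n : ℤ) = C ((n.factorial : ℕ) : ℝ)⁻¹ * lm α n := by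
  simp [hf, gf_nat]

lemma gf_succ (n : ℕ) : ((n : ℝ) + 1) * gf ((n : ℤ) + 1) = gf n := by
  have h := gf_nat (n + 1)
  push_cast at h
  rw [h, gf_nat, Nat.factorial_succ]
  push_cast
  have : (n : ℝ) + 1 ≠ 0 := by positivity
  field_simp

lemma gf_rec (m : ℤ) :
    (m : ℝ) * gf m = (1 - 0 * ((m : ℝ) - 1)) * gf (m - 1) + 0 * gf (m - 2) := by
  simp only [zero_mul, sub_zero, one_mul, add_zero]
  rcases lt_trichotomy m 0 with h | h | h
  · rw [gf_neg m h, gf_neg (m - 1) (by omega), mul_zero]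
  · subst h
    rw [gf_neg (0 - 1) (by omega)]; simp
  · obtain ⟨n, rfl⟩ : ∃ n : ℕ, m = (n : ℤ) + 1 := ⟨(m - 1).toNat, by omega⟩
    have := gf_succ n
    push_cast
    rw [this]
    congr 1
    ring

lemma hf_rec (α : ℝ) (m : ℤ) :
    (m : ℝ[X]) * hf α m = ((X + C α) - 1 * ((m : ℝ[X]) - 1)) * hf α (m - 1)
      + X * hf α (m - 2) := by
  rcases lt_trichotomy m 0 with h | h | h
  · rw [hf_neg α m h, hf_neg α (m - 1) (by omega), hf_neg α (m - 2) (by omega)]; ring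
  · subst h
    rw [hf_neg α (0 - 1) (by omega), hf_neg α (0 - 2) (by omega)]; simp
  · obtain ⟨n, rfl⟩ : ∃ n : ℕ, m = (n : ℤ) + 1 := ⟨(m - 1).toNat, by omega⟩
    rcases n with _ | n
    · have h1 := hf_nat α 1
      have h2 := hf_zero α
      have h3 := hf_neg α (-1) (by omega)
      simp only [Nat.cast_one, Nat.factorial_one, inv_one, map_one, one_mul, lm] at h1
      simp [h1, h2, h3]
    · have e1 : ((n + 1 : ℕ) : ℤ) + 1 = ((n + 2 : ℕ) : ℤ) := by push_cast; ring
      have e2 : ((n + 2 : ℕ) : ℤ) - 1 = ((n + 1 : ℕ) : ℤ) := by push_cast; ring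
      have e3 : ((n + 2 : ℕ) : ℤ) - 2 = (n : ℤ) := by push_cast; ring
      rw [e1, e2, e3]
      have g1 := gf_succ n
      have g2 := gf_succ (n + 1)
      rw [e1] at g2
      have hc1 := congrArg (C : ℝ → ℝ[X]) g1
      have hc2 := congrArg (C : ℝ → ℝ[X]) g2
      have hlm : lm α (n + 2) = (X + C (α - ((n : ℝ) + 2) + 1)) * lm α (n + 1)
        + X * C ((n : ℝ) + 1) * lm α n := by rw [lm]
      simp only [hf, Int.toNat_natCast, hlm]
      push_cast at hc1 hc2 ⊢
      simp only [map_add, map_mul, map_sub, map_one, map_natCast, map_ofNat] at hc1 hc2 ⊢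
      linear_combination (((X + (C α - ((n : ℝ[X]) + 2) + 1)) * lm α (n + 1)
        + X * ((n : ℝ[X]) + 1) * lm α n)) * hc2 + X * lm α n * hc1

lemma lm_deriv (α : ℝ) (n : ℕ) : derivative (lm α (n + 1)) = ((n : ℝ[X]) + 1) * lm α n := by
  induction n using Nat.strong_induction_on with
  | _ n ih =>
    rcases n with _ | n
    · simp [lm]
    · have hlm : lm α (n + 1 + 1) = (X + C (α - ((n : ℝ) + 2) + 1)) * lm α (n + 1)
        + X * C ((n : ℝ) + 1) * lm α n := by rw [lm]
      rw [hlm]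
      simp only [derivative_add, derivative_mul, derivative_X, derivative_C, ih n (by omega)]
      rcases n with _ | n
      · have h2 : (C (2 : ℝ) : ℝ[X]) = 2 := map_ofNat C 2
        simp [lm, h2]
        ring
      · rw [ih n (by omega)]
        have hlm' : lm α (n + 1 + 1) = (X + C (α - ((n : ℝ) + 2) + 1)) * lm α (n + 1)
          + X * C ((n : ℝ) + 1) * lm α n := by rw [lm]
        push_cast
        simp only [map_add, map_sub, map_one, map_natCast, map_ofNat] at hlm' ⊢
        linear_combination (- (n : ℝ[X]) - 2) * hlm'

lemma lm_iter (α : ℝ) (n i : ℕ) :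
    derivative^[i] (lm α n) = C (n.factorial : ℝ) * hf α ((n : ℤ) - i) := by
  induction i generalizing n with
  | zero =>
    simp only [Function.iterate_zero, id, Nat.cast_zero, sub_zero, hf_nat]
    rw [← mul_assoc, ← C_mul, mul_inv_cancel₀ (by positivity)]
    simp
  | succ i ih =>
    rw [Function.iterate_succ_apply]
    rcases n with _ | n
    · rw [hf_neg _ _ (by push_cast; omega)]
      simp [lm]
    · rw [lm_deriv]
      have : ((n : ℝ[X]) + 1) = C ((n : ℝ) + 1) := by simp
      rw [this, iterate_derivative_C_mul, ih]
      rw [← mul_assoc, ← C_mul, Nat.factorial_succ]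
      push_cast
      congr 2
      ring

lemma gf_desc (n i : ℕ) : (n.descFactorial i : ℝ) = (n.factorial : ℝ) * gf ((n : ℤ) - i) := by
  by_cases h : i ≤ n
  · have e : (n : ℤ) - i = ((n - i : ℕ) : ℤ) := by push_cast [h]; ring
    rw [e, gf_nat, ← Nat.factorial_mul_descFactorial h]
    push_cast
    have : ((n - i).factorial : ℝ) ≠ 0 := by positivity
    field_simp
  · rw [gf_neg _ (by omega), Nat.descFactorial_eq_zero_iff_lt.mpr (by omega)]
    simp

lemma T_eq (h : ℤ → R) (lam : YoungDiagram) :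
    T h lam = ((Equiv.Perm.sign (Fin.revPerm : Equiv.Perm (Fin (nrows lam))) : ℤ) : R) *
      Matrix.det (Matrix.of fun i j : Fin (nrows lam) => h ((degVec lam j : ℤ) - (i : ℕ))) := by
  rw [← Matrix.det_permute]
  unfold T D
  congr 1
  ext i j
  simp only [Matrix.of_apply, Matrix.submatrix_apply, id, Fin.revPerm_apply, Fin.val_rev, aOf,
    degVec]
  congr 1
  have := i.2
  have := j.2
  omega

lemma degVec_inj (lam : YoungDiagram) : Function.Injective (degVec lam) := by
  intro i j hij
  unfold degVec at hij
  have := i.2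
  have := j.2
  rcases le_total (i : ℕ) j with h | h
  · have := lam.rowLen_anti _ _ h
    exact Fin.ext (by omega)
  · have := lam.rowLen_anti _ _ h
    exact Fin.ext (by omega)

noncomputable def V (lam : YoungDiagram) : ℝ :=
  ∏ p ∈ Finset.univ.filter (fun p : Fin (nrows lam) × Fin (nrows lam) => p.1 < p.2),
        ((degVec lam p.2 : ℝ) - (degVec lam p.1 : ℝ))

lemma V_ne (lam : YoungDiagram) : V lam ≠ 0 := by
  unfold V
  rw [Finset.prod_ne_zero_iff]
  intro p hp
  have hp := (Finset.mem_filter.mp hp).2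
  rw [sub_ne_zero]
  intro hh
  have := degVec_inj lam (Nat.cast_injective hh)
  exact hp.ne this.symm

noncomputable def P (lam : YoungDiagram) : ℝ := ∏ j, ((degVec lam j).factorial : ℝ)

lemma P_ne (lam : YoungDiagram) : P lam ≠ 0 := by
  unfold P
  positivity

lemma V_eq (lam : YoungDiagram) : V lam = P lam *
    Matrix.det (Matrix.of fun i j : Fin (nrows lam) => gf ((degVec lam j : ℤ) - (i : ℕ))) := by
  have h := Matrix.det_eval_matrixOfPolynomials_eq_det_vandermonde
    (fun j : Fin (nrows lam) => (degVec lam j : ℝ)) (fun i => descPochhammer ℝ i)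
    (fun i => descPochhammer_natDegree ℝ i) (fun i => monic_descPochhammer ℝ i)
  rw [Matrix.det_vandermonde, ← Matrix.det_transpose] at h
  have hV : V lam = ∏ i : Fin (nrows lam), ∏ j ∈ Ioi i,
      ((degVec lam j : ℝ) - (degVec lam i : ℝ)) := by
    unfold V
    rw [Finset.prod_sigma']
    refine Finset.prod_bij' (fun p _ => ⟨p.1, p.2⟩) (fun q _ => (q.1, q.2)) ?_ ?_ ?_ ?_ ?_ <;>
      simp
  rw [hV, h, P, ← Matrix.det_mul_row]
  congr 1
  ext i j
  simp only [Matrix.transpose_apply, Matrix.of_apply, descPochhammer_eval_eq_descFactorial,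
    gf_desc]

lemma Wr_eq (α : ℝ) (lam : YoungDiagram) : Wr (fun i => lm α (degVec lam i)) = C (P lam) *
    Matrix.det (Matrix.of fun i j : Fin (nrows lam) => hf α ((degVec lam j : ℤ) - (i : ℕ))) := by
  unfold Wr
  rw [P, map_prod, ← Matrix.det_mul_row]
  congr 1
  ext1 i j
  simp only [Matrix.of_apply, lm_iter]

lemma F_eq (lam : YoungDiagram) : (SYTCount lam : ℝ) = (lam.card.factorial : ℝ) * T gf lam := by
  obtain ⟨n, hn⟩ : ∃ n, lam.card = n := ⟨_, rfl⟩
  induction n generalizing lam with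
  | zero =>
    have hr : nrows lam = 0 := by
      by_contra hne
      have h1 := (rowLen_pos_iff lam 0).mpr (by omega)
      have : (0, 0) ∈ lam.cells := YoungDiagram.mem_iff_lt_rowLen.mpr h1
      have := Finset.card_pos.mpr ⟨_, this⟩
      unfold YoungDiagram.card at hn
      omega
    rw [SYT_bot lam hn, hn]
    have : T gf lam = D gf 0 (aOf lam) := by unfold T; rw [hr]
    rw [this]
    simp [D]
  | succ n ih =>
    have hrec := T_rec gf gf_neg gf_zero 1 0 0 gf_rec lam
    rw [SYT_rec lam (by omega), hn, Nat.factorial_succ]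
    simp only [zero_mul, sub_zero, one_mul, add_zero, hn] at hrec
    push_cast at hrec ⊢
    rw [mul_comm ((n : ℝ) + 1), mul_assoc, hrec, Finset.mul_sum]
    refine Finset.sum_congr rfl fun j hj => ?_
    have hc := remH_card lam j (mem_corners.mp hj)
    rw [ih (remH lam 1 j) (by omega), show (remH lam 1 j).card = n by omega]

lemma main_eq (α : ℝ) (lam : YoungDiagram) :
    C (SYTCount lam : ℝ) * lW α lam = C (lam.card.factorial : ℝ) * T (hf α) lam := by
  have hlW : lW α lam = C (V lam)⁻¹ * Wr (fun i => lm α (degVec lam i)) := rfl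
  rw [hlW, Wr_eq, F_eq, T_eq gf, T_eq (hf α)]
  have hV := V_eq lam
  have hV0 := V_ne lam
  have hP := P_ne lam
  set dg := Matrix.det (Matrix.of fun i j : Fin (nrows lam) => gf ((degVec lam j : ℤ) - (i : ℕ)))
  set dh := Matrix.det
    (Matrix.of fun i j : Fin (nrows lam) => hf α ((degVec lam j : ℤ) - (i : ℕ)))
  set ε : ℤ := (Equiv.Perm.sign (Fin.revPerm : Equiv.Perm (Fin (nrows lam))) : ℤ)
  have key : (V lam)⁻¹ * P lam * dg = 1 := by
    rw [mul_assoc, ← hV, inv_mul_cancel₀ hV0]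
  have hε : ((ε : ℤ) : ℝ[X]) = C (ε : ℝ) := by simp
  rw [hε]
  have key' := congrArg (C : ℝ → ℝ[X]) key
  simp only [C_mul, map_one] at key' ⊢
  linear_combination (C (lam.card.factorial : ℝ) * C (ε : ℝ) * dh) * key'

end Final

end WL

theorem stmt13 (α : ℝ) (lam : YoungDiagram) (h : lam ≠ ⊥) :
    C (SYTCount lam : ℝ) * lW α lam
      = (∑ᶠ μ ∈ {μ : YoungDiagram | AddBox μ lam},
            (X + C (α - (skewContent lam μ : ℝ))) * (C (SYTCount μ : ℝ) * lW α μ))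
        + X * C ((lam.card : ℝ) - 1) *
            ((∑ᶠ ρ ∈ {ρ : YoungDiagram | AddDominoH ρ lam}, C (SYTCount ρ : ℝ) * lW α ρ)
              - ∑ᶠ ρ ∈ {ρ : YoungDiagram | AddDominoV ρ lam}, C (SYTCount ρ : ℝ) * lW α ρ) := by
  have hpos : 1 ≤ lam.card := by
    by_contra hc
    apply h
    have h0 : lam.card = 0 := by omega
    have : lam.cells = ∅ := Finset.card_eq_zero.mp h0
    exact YoungDiagram.ext (by simpa using this)
  obtain ⟨n, hn⟩ : ∃ n, lam.card = n + 1 := ⟨lam.card - 1, by omega⟩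
  simp only [WL.main_eq]
  rw [WL.finsum_bij (WL.bij_box lam), WL.finsum_bij (WL.bij_H lam), WL.finsum_bij (WL.bij_V lam)]
  have hrec := WL.T_rec (WL.hf α) (WL.hf_neg α) (WL.hf_zero α) (X + C α) 1 X (WL.hf_rec α) lam
  have e1 : ∑ j ∈ WL.corners lam, (X + C (α - (skewContent lam (WL.remH lam 1 j) : ℝ))) *
        (C ((WL.remH lam 1 j).card.factorial : ℝ) * WL.T (WL.hf α) (WL.remH lam 1 j))
      = C (n.factorial : ℝ) * ∑ j ∈ WL.corners lam,
        ((X + C α) - 1 * ((WL.aOf lam j : ℝ[X]) - 1)) * WL.T (WL.hf α) (WL.remH lam 1 j) := by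
    rw [Finset.mul_sum]
    refine Finset.sum_congr rfl fun j hj => ?_
    have hj := WL.mem_corners.mp hj
    have hc := WL.remH_card lam j hj
    rw [show (WL.remH lam 1 j).card = n by omega, WL.skewContent_remH lam j hj]
    simp only [WL.aOf]
    push_cast
    simp only [map_sub, map_natCast, map_one]
    ring
  have e2 : C ((lam.card : ℝ) - 1) * ∑ j ∈ WL.hRows lam,
        (C ((WL.remH lam 2 j).card.factorial : ℝ) * WL.T (WL.hf α) (WL.remH lam 2 j))
      = C (n.factorial : ℝ) * ∑ j ∈ WL.hRows lam, WL.T (WL.hf α) (WL.remH lam 2 j) := by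
    rw [Finset.mul_sum, Finset.mul_sum]
    refine Finset.sum_congr rfl fun j hj => ?_
    have hc := WL.card_domH ((WL.bij_H lam).1 hj)
    obtain ⟨k, rfl⟩ : ∃ k, n = k + 1 := ⟨n - 1, by omega⟩
    rw [show (WL.remH lam 2 j).card = k by omega, ← mul_assoc, ← C_mul, hn, Nat.factorial_succ]
    push_cast
    congr 2
    ring
  have e3 : C ((lam.card : ℝ) - 1) * ∑ j ∈ WL.vRows lam,
        (C ((WL.remV lam j).card.factorial : ℝ) * WL.T (WL.hf α) (WL.remV lam j))
      = C (n.factorial : ℝ) * ∑ j ∈ WL.vRows lam, WL.T (WL.hf α) (WL.remV lam j) := by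
    rw [Finset.mul_sum, Finset.mul_sum]
    refine Finset.sum_congr rfl fun j hj => ?_
    have hc := WL.card_domV ((WL.bij_V lam).1 hj)
    obtain ⟨k, rfl⟩ : ∃ k, n = k + 1 := ⟨n - 1, by omega⟩
    rw [show (WL.remV lam j).card = k by omega, ← mul_assoc, ← C_mul, hn, Nat.factorial_succ]
    push_cast
    congr 2
    ring
  rw [e1, mul_assoc, mul_sub, e2, e3]
  have e4 : C (lam.card.factorial : ℝ) = C (n.factorial : ℝ) * (lam.card : ℝ[X]) := by
    rw [hn, Nat.factorial_succ]
    push_cast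
    simp only [map_mul, map_add, map_natCast, map_one]
    ring
  rw [e4, mul_assoc, hrec]
  ring
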